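/- arXiv:math/0007060 — 2 statements merged into one kernel-verified Lean document; each statement's English description precedes it below -/
import Mathlib

section
/- (Covariant Hamilton equations, general case.) Let X^i_α : ℝ^p × ℝ^n → ℝ be smooth, with F_j{}^i{}_α = ∇_j X^i_α − g_{hj} g^{ik} ∇_k X^h_α and ω_{jhα} = ½ g_{kh} F_j{}^k{}_α. A smooth map x : ℝ^p → ℝ^n satisfies the generalized Poisson system h^{αβ} x^i_{αβ} = g^{ih} h^{αβ} g_{kj} (∇_h X^k_α) X^j_β + h^{αβ} F_j{}^i{}_α x^j_β + h^{αβ} D_β X^i_α (all quantities depending on (t,x) evaluated at (t, x(t))) if and only if there exist smooth functions u^{αi} : ℝ^p → ℝ satisfying the covariant Hamilton PDEs system: u^{αi} = h^{αβ} x^i_β and ∂u^{αi}/∂t^α + H^α_{αλ} u^{λi} + G^i_{jk} u^{αj} ∂x^k/∂t^α = g^{ih} h^{αβ} g_{jk} X^j_β ∇_h X^k_α + 2 g^{hi} ω_{jhα} u^{αj} + h^{αβ} D_β X^i_α. -/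
/-!
The function `u` is forced: `u^{αi} = h^{αβ} x^i_β`, and it is smooth because matrix inversion is
smooth (Cramer's rule). It remains to see that, for this `u`, the two second-order systems agree
term by term.

* Left-hand sides: `∂_α (h^{αβ} x^i_β) = (∂_α h^{αβ}) x^i_β + h^{αβ} ∂_α x^i_β`, and the formula
  `∂_γ h^{-1} = - h^{-1} (∂_γ h) h^{-1}` (`pd_minv`) turns `∂_α h^{αβ} + H^α_{αλ} h^{λβ}` into
  `- h^{αγ} H^β_{αγ}` (`div_minv`), which is the Christoffel term of the covariant Hessian.
* Right-hand sides: `2 g^{hi} ω_{jhα} = g^{hi} g_{kh} F_j^k_α = F_j^i_α` (`raise_lower`).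
-/

open scoped BigOperators

noncomputable section

/-- Partial derivative of `f : ℝ^m → ℝ` at `t` in the `α`-th coordinate direction. -/
def pd {m : ℕ} (α : Fin m) (f : (Fin m → ℝ) → ℝ) (t : Fin m → ℝ) : ℝ :=
  fderiv ℝ f t (Pi.single α 1)

/-- Componentwise inverse of a square array of reals (matrix inversion). -/
def minv {m : ℕ} (A : Fin m → Fin m → ℝ) : Fin m → Fin m → ℝ :=
  fun i j => (Matrix.of A)⁻¹ i j

/-- `√|det h(t)|`, the volume density of the metric `h`. -/
def sqrtDet {p : ℕ} (h : (Fin p → ℝ) → Fin p → Fin p → ℝ) (t : Fin p → ℝ) : ℝ :=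
  Real.sqrt |(Matrix.of (h t)).det|

/-- First jet `x^i_α = ∂x^i/∂t^α` of a map `x : ℝ^p → ℝ^n`. -/
def jet {p n : ℕ} (x : (Fin p → ℝ) → Fin n → ℝ) (t : Fin p → ℝ) :
    Fin n → Fin p → ℝ :=
  fun i α => pd α (fun s => x s i) t

/-- Christoffel symbols `G^i_{jk} = ½ g^{il}(∂g_{lj}/∂x^k + ∂g_{lk}/∂x^j − ∂g_{jk}/∂x^l)`. -/
def christoffel {m : ℕ} (g : (Fin m → ℝ) → Fin m → Fin m → ℝ)
    (i j k : Fin m) (q : Fin m → ℝ) : ℝ :=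
  (1 / 2) * ∑ l, minv (g q) i l *
    (pd k (fun y => g y l j) q + pd j (fun y => g y l k) q - pd l (fun y => g y j k) q)

/-- Covariant second jet
`x^i_{αβ} = ∂²x^i/∂t^α∂t^β − H^γ_{αβ} x^i_γ + G^i_{jk} x^j_α x^k_β`. -/
def covHess {p n : ℕ} (h : (Fin p → ℝ) → Fin p → Fin p → ℝ)
    (g : (Fin n → ℝ) → Fin n → Fin n → ℝ)
    (x : (Fin p → ℝ) → Fin n → ℝ) (i : Fin n) (α β : Fin p) (t : Fin p → ℝ) : ℝ :=
  pd α (fun s => jet x s i β) t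
    - (∑ γ, christoffel h γ α β t * jet x t i γ)
    + ∑ j, ∑ k, christoffel g i j k (x t) * jet x t j α * jet x t k β

/-- `∇_j X^i_α = ∂X^i_α/∂x^j + G^i_{jk} X^k_α`. -/
def nablaX {p n : ℕ} (g : (Fin n → ℝ) → Fin n → Fin n → ℝ)
    (X : Fin n → Fin p → (Fin p → ℝ) → (Fin n → ℝ) → ℝ)
    (j i : Fin n) (α : Fin p) (t : Fin p → ℝ) (q : Fin n → ℝ) : ℝ :=
  pd j (fun y => X i α t y) q + ∑ k, christoffel g i j k q * X k α t q

/-- `D_β X^i_α = ∂X^i_α/∂t^β − H^γ_{βα} X^i_γ`. -/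
def Dt {p n : ℕ} (h : (Fin p → ℝ) → Fin p → Fin p → ℝ)
    (X : Fin n → Fin p → (Fin p → ℝ) → (Fin n → ℝ) → ℝ)
    (β : Fin p) (i : Fin n) (α : Fin p) (t : Fin p → ℝ) (q : Fin n → ℝ) : ℝ :=
  pd β (fun s => X i α s q) t - ∑ γ, christoffel h γ β α t * X i γ t q

/-- External tensor `F_j{}^i{}_α = ∇_j X^i_α − g_{hj} g^{ik} ∇_k X^h_α`. -/
def Fext {p n : ℕ} (g : (Fin n → ℝ) → Fin n → Fin n → ℝ)
    (X : Fin n → Fin p → (Fin p → ℝ) → (Fin n → ℝ) → ℝ)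
    (j i : Fin n) (α : Fin p) (t : Fin p → ℝ) (q : Fin n → ℝ) : ℝ :=
  nablaX g X j i α t q
    - ∑ h', ∑ k, g q h' j * minv (g q) i k * nablaX g X k h' α t q

/-- Potential energy `f = ½ h^{αβ} g_{ij} X^i_α X^j_β`. -/
def potE {p n : ℕ} (h : (Fin p → ℝ) → Fin p → Fin p → ℝ)
    (g : (Fin n → ℝ) → Fin n → Fin n → ℝ)
    (X : Fin n → Fin p → (Fin p → ℝ) → (Fin n → ℝ) → ℝ)
    (t : Fin p → ℝ) (q : Fin n → ℝ) : ℝ :=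
  (1 / 2) * ∑ α, ∑ β, ∑ i, ∑ j, minv (h t) α β * g q i j * X i α t q * X j β t q

/-- A map `x` is an extremal of the first-order Lagrangian `L = L(t, x, x_·)` iff it
satisfies the Euler–Lagrange equations
`∂L/∂x^k − (d/dt^α)(∂L/∂x^k_α) = 0` along the first jet of `x`. -/
def IsExtremal {p n : ℕ}
    (L : (Fin p → ℝ) → (Fin n → ℝ) → (Fin n → Fin p → ℝ) → ℝ)
    (x : (Fin p → ℝ) → Fin n → ℝ) : Prop :=
  ∀ (t : Fin p → ℝ) (k : Fin n),
    fderiv ℝ (fun q => L t q (jet x t)) (x t) (Pi.single k 1)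
      - (∑ α, pd α
          (fun s => fderiv ℝ (fun v => L s (x s) v) (jet x s)
            (Pi.single k (Pi.single α 1))) t) = 0

theorem minv_symm {m : ℕ} {A : Fin m → Fin m → ℝ} (hA : ∀ i j, A i j = A j i) (i j : Fin m) :
    minv A i j = minv A j i := by
  have hT : (Matrix.of A).transpose = Matrix.of A := by
    ext a b
    exact hA b a
  unfold minv
  rw [← Matrix.transpose_apply (Matrix.of A)⁻¹ j i, Matrix.transpose_nonsing_inv, hT]

theorem contDiff_det {E : Type*} [NormedAddCommGroup E] [NormedSpace ℝ E] {m : ℕ}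
    {M : E → Matrix (Fin m) (Fin m) ℝ}
    (hM : ∀ i j, ContDiff ℝ (⊤ : ℕ∞) fun t => M t i j) :
    ContDiff ℝ (⊤ : ℕ∞) fun t => (M t).det := by
  simp only [Matrix.det_apply']
  exact ContDiff.sum fun σ _ => contDiff_const.mul (contDiff_prod fun i _ => hM _ _)

theorem contDiff_minv {E : Type*} [NormedAddCommGroup E] [NormedSpace ℝ E] {m : ℕ}
    {A : E → Fin m → Fin m → ℝ}
    (hA : ∀ i j, ContDiff ℝ (⊤ : ℕ∞) fun t => A t i j)
    (hdet : ∀ t, (Matrix.of (A t)).det ≠ 0) (i j : Fin m) :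
    ContDiff ℝ (⊤ : ℕ∞) fun t => minv (A t) i j := by
  have hcramer : (fun t => minv (A t) i j) = fun t =>
      ((Matrix.of (A t)).det)⁻¹ * ((Matrix.of (A t)).updateRow j (Pi.single i 1)).det := by
    funext t
    simp [minv, Matrix.inv_def, Matrix.adjugate_apply]
  rw [hcramer]
  refine ((contDiff_det fun a b => hA a b).inv hdet).mul (contDiff_det fun a b => ?_)
  by_cases hab : a = j
  · subst hab
    simpa using contDiff_const
  · simpa [Matrix.updateRow_ne hab] using hA a b

theorem contDiff_jet {p n : ℕ} {x : (Fin p → ℝ) → Fin n → ℝ} (hx : ContDiff ℝ (⊤ : ℕ∞) x)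
    (i : Fin n) (α : Fin p) : ContDiff ℝ (⊤ : ℕ∞) fun t => jet x t i α := by
  have hxi : ContDiff ℝ (⊤ : ℕ∞) fun s => x s i := contDiff_pi.1 hx i
  exact (hxi.fderiv_right (m := (⊤ : ℕ∞)) le_rfl).clm_apply contDiff_const

theorem pd_mul {m : ℕ} {f f' : (Fin m → ℝ) → ℝ} {t : Fin m → ℝ} (α : Fin m)
    (hf : DifferentiableAt ℝ f t) (hf' : DifferentiableAt ℝ f' t) :
    pd α (fun s => f s * f' s) t = pd α f t * f' t + f t * pd α f' t := by
  unfold pd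
  rw [fderiv_fun_mul hf hf']
  simp
  ring

theorem pd_sum {m : ℕ} {ι : Type*} [Fintype ι] {f : ι → (Fin m → ℝ) → ℝ} {t : Fin m → ℝ}
    (α : Fin m) (hf : ∀ i, DifferentiableAt ℝ (f i) t) :
    pd α (fun s => ∑ i, f i s) t = ∑ i, pd α (f i) t := by
  unfold pd
  rw [fderiv_fun_sum fun i _ => hf i]
  simp

/-- `∂_γ h^{-1} = - h^{-1} (∂_γ h) h^{-1}`, obtained by differentiating `h^{-1} h = 1`. -/
theorem pd_minv {p : ℕ} {h : (Fin p → ℝ) → Fin p → Fin p → ℝ}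
    (hsmooth : ∀ α β, ContDiff ℝ (⊤ : ℕ∞) fun t => h t α β)
    (hdet : ∀ t, (Matrix.of (h t)).det ≠ 0) (t : Fin p → ℝ) (γ α β : Fin p) :
    pd γ (fun s => minv (h s) α β) t
      = -∑ μ, ∑ ν, minv (h t) α μ * pd γ (fun s => h s μ ν) t * minv (h t) ν β := by
  set dK : Matrix (Fin p) (Fin p) ℝ := Matrix.of fun a b => pd γ (fun s => minv (h s) a b) t
    with hdK
  set dM : Matrix (Fin p) (Fin p) ℝ := Matrix.of fun a b => pd γ (fun s => h s a b) t with hdM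
  have hd : ∀ a b, DifferentiableAt ℝ (fun s => h s a b) t := fun a b =>
    (hsmooth a b).differentiable (by simp) t
  have hdi : ∀ a b, DifferentiableAt ℝ (fun s => minv (h s) a b) t := fun a b =>
    (contDiff_minv hsmooth hdet a b).differentiable (by simp) t
  have hprod : dK * Matrix.of (h t) + (Matrix.of (h t))⁻¹ * dM = 0 := by
    ext a c
    have hconst : (fun s => ∑ b, minv (h s) a b * h s b c)
        = fun _ => (1 : Matrix (Fin p) (Fin p) ℝ) a c := by
      funext s
      rw [← Matrix.nonsing_inv_mul (Matrix.of (h s)) (isUnit_iff_ne_zero.2 (hdet s)),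
        Matrix.mul_apply]
      rfl
    have h0 : pd γ (fun s => ∑ b, minv (h s) a b * h s b c) t = 0 := by
      rw [hconst]
      simp [pd]
    rw [pd_sum γ fun b => (hdi a b).fun_mul (hd b c)] at h0
    simp only [pd_mul γ (hdi a _) (hd _ c), Finset.sum_add_distrib] at h0
    rw [Matrix.add_apply, Matrix.mul_apply, Matrix.mul_apply]
    exact h0
  have hsol : dK = -((Matrix.of (h t))⁻¹ * dM * (Matrix.of (h t))⁻¹) := by
    have hR := Matrix.mul_nonsing_inv (Matrix.of (h t)) (isUnit_iff_ne_zero.2 (hdet t))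
    calc dK = dK * (Matrix.of (h t)) * (Matrix.of (h t))⁻¹ := by
          rw [Matrix.mul_assoc, hR, Matrix.mul_one]
      _ = _ := by rw [eq_neg_of_add_eq_zero_left hprod, Matrix.neg_mul]
  have hentry := congrFun (congrFun hsol α) β
  simp only [Matrix.neg_apply, Matrix.mul_apply, Finset.sum_mul] at hentry
  rw [Finset.sum_comm] at hentry
  exact hentry

/-- The contracted identity `∂_α h^{αβ} + H^α_{αλ} h^{λβ} = - h^{αγ} H^β_{αγ}`. -/
theorem div_minv {p : ℕ} {h : (Fin p → ℝ) → Fin p → Fin p → ℝ}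
    (hsymm : ∀ t α β, h t α β = h t β α)
    (hsmooth : ∀ α β, ContDiff ℝ (⊤ : ℕ∞) fun t => h t α β)
    (hdet : ∀ t, (Matrix.of (h t)).det ≠ 0) (t : Fin p → ℝ) (β : Fin p) :
    (∑ α, pd α (fun s => minv (h s) α β) t)
        + ∑ α, ∑ l, christoffel h α α l t * minv (h t) l β
      = -∑ α, ∑ γ, minv (h t) α γ * christoffel h β α γ t := by
  have hK : ∀ a b, minv (h t) a b = minv (h t) b a := minv_symm (hsymm t)
  have hD : ∀ c a b, pd c (fun s => h s a b) t = pd c (fun s => h s b a) t := by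
    intro c a b
    simp only [hsymm _ a b]
  simp only [pd_minv hsmooth hdet, christoffel]
  generalize hKe : minv (h t) = K at *
  generalize hDe : (fun c a b => pd c (fun s => h s a b) t) = D
  have hDa : ∀ c a b, pd c (fun s => h s a b) t = D c a b := by
    intro c a b
    rw [← hDe]
  simp only [hDa] at hD ⊢
  -- The two scalars to which every term of the identity reduces.
  set S₁ := ∑ a, ∑ b, ∑ c, K a b * D a b c * K c β with hS₁
  set S₂ := ∑ a, ∑ b, ∑ c, K a b * D c a b * K c β with hS₂
  have hdiv : ∑ α, -∑ μ, ∑ ν, K α μ * D α μ ν * K ν β = -S₁ := by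
    rw [Finset.sum_neg_distrib]
  have htrace : ∑ α, ∑ l, (1 / 2 * ∑ m, K α m * (D l m α + D α m l - D m α l)) * K l β
      = 1 / 2 * S₂ := by
    have e₁ : ∑ a, ∑ c, ∑ b, K a b * D c b a * K c β = S₂ := by
      rw [hS₂]
      refine Finset.sum_congr rfl fun a _ => ?_
      rw [Finset.sum_comm]
      simp only [hD _ a]
    have e₂ : ∑ a, ∑ c, ∑ b, K a b * D a b c * K c β = S₁ :=
      Finset.sum_congr rfl fun a _ => Finset.sum_comm
    have e₃ : ∑ a, ∑ c, ∑ b, K a b * D b a c * K c β = S₁ := by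
      rw [← e₂]
      calc _ = ∑ a, ∑ b, ∑ c, K a b * D b a c * K c β :=
            Finset.sum_congr rfl fun a _ => Finset.sum_comm
        _ = ∑ b, ∑ a, ∑ c, K a b * D b a c * K c β := Finset.sum_comm
        _ = ∑ b, ∑ a, ∑ c, K b a * D b a c * K c β := by simp only [hK]
        _ = _ := Finset.sum_congr rfl fun a _ => Finset.sum_comm
    calc _ = 1 / 2 * ((∑ a, ∑ c, ∑ b, K a b * D c b a * K c β)
          + (∑ a, ∑ c, ∑ b, K a b * D a b c * K c β)
          - ∑ a, ∑ c, ∑ b, K a b * D b a c * K c β) := by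
          simp only [← Finset.sum_add_distrib, ← Finset.sum_sub_distrib, Finset.mul_sum,
            Finset.sum_mul]
          refine Finset.sum_congr rfl fun a _ => Finset.sum_congr rfl fun b _ =>
            Finset.sum_congr rfl fun c _ => ?_
          ring
      _ = _ := by
          rw [e₁, e₂, e₃]
          ring
  have hcontr : ∑ α, ∑ γ, K α γ * (1 / 2 * ∑ l, K β l * (D γ l α + D α l γ - D l α γ))
      = S₁ - 1 / 2 * S₂ := by
    have e₁ : ∑ a, ∑ b, ∑ c, K a b * D b c a * K c β = S₁ := by
      rw [Finset.sum_comm, hS₁]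
      refine Finset.sum_congr rfl fun a _ => Finset.sum_congr rfl fun b _ =>
        Finset.sum_congr rfl fun c _ => ?_
      rw [hK b a, hD a c b]
    have e₂ : ∑ a, ∑ b, ∑ c, K a b * D a c b * K c β = S₁ := by
      rw [hS₁]
      refine Finset.sum_congr rfl fun a _ => Finset.sum_congr rfl fun b _ =>
        Finset.sum_congr rfl fun c _ => ?_
      rw [hD a c b]
    calc _ = 1 / 2 * ((∑ a, ∑ b, ∑ c, K a b * D b c a * K c β)
          + (∑ a, ∑ b, ∑ c, K a b * D a c b * K c β) - S₂) := by
          simp only [hS₂, ← Finset.sum_add_distrib, ← Finset.sum_sub_distrib, Finset.mul_sum]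
          refine Finset.sum_congr rfl fun a _ => Finset.sum_congr rfl fun b _ =>
            Finset.sum_congr rfl fun c _ => ?_
          rw [hK β c]
          ring
      _ = _ := by
          rw [e₁, e₂]
          ring
  rw [hdiv, htrace, hcontr]
  ring

/-- Left-hand sides of the two systems: the covariant divergence of `h^{αβ} x^i_β` is the
`h`-trace of the covariant Hessian of `x`. -/
theorem div_eq_trace_covHess {p n : ℕ} {h : (Fin p → ℝ) → Fin p → Fin p → ℝ}
    (hsymm : ∀ t α β, h t α β = h t β α)
    (hsmooth : ∀ α β, ContDiff ℝ (⊤ : ℕ∞) fun t => h t α β)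
    (hdet : ∀ t, (Matrix.of (h t)).det ≠ 0)
    (g : (Fin n → ℝ) → Fin n → Fin n → ℝ)
    {x : (Fin p → ℝ) → Fin n → ℝ} (hx : ContDiff ℝ (⊤ : ℕ∞) x) (t : Fin p → ℝ) (i : Fin n) :
    (∑ α, pd α (fun s => ∑ β, minv (h s) α β * jet x s i β) t)
        + (∑ α, ∑ l, christoffel h α α l t * ∑ β, minv (h t) l β * jet x t i β)
        + (∑ α, ∑ j, ∑ k, christoffel g i j k (x t)
            * (∑ β, minv (h t) α β * jet x t j β) * jet x t k α)
      = ∑ α, ∑ β, minv (h t) α β * covHess h g x i α β t := by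
  have hK : ∀ a b, minv (h t) a b = minv (h t) b a := minv_symm (hsymm t)
  have hdi : ∀ a b, DifferentiableAt ℝ (fun s => minv (h s) a b) t := fun a b =>
    (contDiff_minv hsmooth hdet a b).differentiable (by simp) t
  have hdj : ∀ b, DifferentiableAt ℝ (fun s => jet x s i b) t := fun b =>
    (contDiff_jet hx i b).differentiable (by simp) t
  have hleib : ∑ α, pd α (fun s => ∑ β, minv (h s) α β * jet x s i β) t
      = (∑ β, (∑ α, pd α (fun s => minv (h s) α β) t) * jet x t i β)
        + ∑ α, ∑ β, minv (h t) α β * pd α (fun s => jet x s i β) t := by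
    simp only [Finset.sum_mul]
    rw [Finset.sum_comm, ← Finset.sum_add_distrib]
    refine Finset.sum_congr rfl fun α _ => ?_
    rw [pd_sum α fun b => (hdi α b).fun_mul (hdj b), ← Finset.sum_add_distrib]
    exact Finset.sum_congr rfl fun b _ => pd_mul α (hdi α b) (hdj b)
  have hchr : ∑ α, ∑ l, christoffel h α α l t * ∑ β, minv (h t) l β * jet x t i β
      = ∑ β, (∑ α, ∑ l, christoffel h α α l t * minv (h t) l β) * jet x t i β := by
    simp only [Finset.sum_mul, Finset.mul_sum, ← mul_assoc]
    rw [Finset.sum_comm (s := Finset.univ) (t := Finset.univ)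
      (f := fun β α => ∑ l, christoffel h α α l t * minv (h t) l β * jet x t i β)]
    exact Finset.sum_congr rfl fun a _ => Finset.sum_comm
  have hcon : (∑ β, (∑ α, pd α (fun s => minv (h s) α β) t) * jet x t i β)
        + ∑ β, (∑ α, ∑ l, christoffel h α α l t * minv (h t) l β) * jet x t i β
      = -∑ α, ∑ β, minv (h t) α β * ∑ γ, christoffel h γ α β t * jet x t i γ := by
    rw [← Finset.sum_add_distrib]
    simp only [← add_mul, div_minv hsymm hsmooth hdet t, neg_mul, Finset.sum_neg_distrib]
    simp only [Finset.sum_mul, Finset.mul_sum, ← mul_assoc]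
    rw [Finset.sum_comm]
    congr 1
    exact Finset.sum_congr rfl fun a _ => Finset.sum_comm
  have hgam : ∑ α, ∑ j, ∑ k, christoffel g i j k (x t)
            * (∑ β, minv (h t) α β * jet x t j β) * jet x t k α
      = ∑ α, ∑ β, minv (h t) α β
          * ∑ j, ∑ k, christoffel g i j k (x t) * jet x t j α * jet x t k β := by
    rw [Finset.sum_comm (s := Finset.univ) (t := Finset.univ) (f := fun α β => minv (h t) α β
          * ∑ j, ∑ k, christoffel g i j k (x t) * jet x t j α * jet x t k β)]
    refine Finset.sum_congr rfl fun a _ => ?_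
    simp only [Finset.sum_mul, Finset.mul_sum]
    rw [Finset.sum_comm (s := Finset.univ) (t := Finset.univ)
      (f := fun b j => ∑ k, minv (h t) b a
        * (christoffel g i j k (x t) * jet x t j b * jet x t k a))]
    refine Finset.sum_congr rfl fun j _ => ?_
    rw [Finset.sum_comm]
    refine Finset.sum_congr rfl fun b _ => Finset.sum_congr rfl fun k _ => ?_
    rw [hK a b]
    ring
  rw [hgam, hleib, hchr]
  simp only [covHess, mul_add, mul_sub, Finset.sum_add_distrib, Finset.sum_sub_distrib]
  linear_combination hcon

/-- Lowering and then raising an index: `g^{hi} g_{kh} F^k = F^i`. -/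
theorem raise_lower {n : ℕ} {A : Fin n → Fin n → ℝ} (hA : ∀ i j, A i j = A j i)
    (hdet : (Matrix.of A).det ≠ 0) (F : Fin n → ℝ) (i : Fin n) :
    ∑ h', minv A h' i * ∑ k, A k h' * F k = F i := by
  have hone : ∀ k, ∑ h', minv A h' i * A k h' = (1 : Matrix (Fin n) (Fin n) ℝ) i k := by
    intro k
    rw [← Matrix.nonsing_inv_mul (Matrix.of A) (isUnit_iff_ne_zero.2 hdet), Matrix.mul_apply]
    refine Finset.sum_congr rfl fun a _ => ?_
    rw [minv_symm hA a i, hA k a]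
    rfl
  simp only [Finset.mul_sum, ← mul_assoc]
  rw [Finset.sum_comm]
  simp only [← Finset.sum_mul, hone, Matrix.one_apply]
  simp

/-- Gyroscopic terms on the right-hand sides: `2 g^{hi} ω_{jhα} u^{αj} = h^{αβ} F_j^i_α x^j_β`,
where `A`, `K`, `F` and `v` stand for `g`, `h^{-1}`, `F` and the first jet of `x` at a point. -/
theorem gyroscopic_eq {p n : ℕ} {A : Fin n → Fin n → ℝ} (hA : ∀ i j, A i j = A j i)
    (hdet : (Matrix.of A).det ≠ 0) (K : Fin p → Fin p → ℝ) (F : Fin n → Fin n → Fin p → ℝ)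
    (v : Fin n → Fin p → ℝ) (i : Fin n) :
    2 * (∑ h', ∑ α, ∑ j, minv A h' i * ((1 / 2) * ∑ k, A k h' * F j k α)
        * ∑ β, K α β * v j β)
      = ∑ α, ∑ β, ∑ j, K α β * F j i α * v j β := by
  rw [Finset.sum_comm, Finset.mul_sum]
  refine Finset.sum_congr rfl fun α _ => ?_
  rw [Finset.sum_comm, Finset.sum_comm (γ := Fin p), Finset.mul_sum]
  refine Finset.sum_congr rfl fun j _ => ?_
  rw [← Finset.sum_mul]
  have hF : ∑ h', minv A h' i * ((1 / 2) * ∑ k, A k h' * F j k α) = 1 / 2 * F j i α := by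
    rw [← raise_lower hA hdet (fun k => F j k α) i, Finset.mul_sum]
    exact Finset.sum_congr rfl fun _ _ => by ring
  rw [hF, Finset.mul_sum, Finset.mul_sum]
  exact Finset.sum_congr rfl fun _ _ => by ring

/-- STATEMENT 13 (covariant Hamilton equations, general case), with
`ω_{jhα} = ½ g_{kh} F_j{}^k{}_α`. -/
theorem covariant_hamilton_general_case
    {p n : ℕ} (hp : 0 < p) (hn : 0 < n)
    (h : (Fin p → ℝ) → Fin p → Fin p → ℝ)
    (hsymm : ∀ t α β, h t α β = h t β α)
    (hsmooth : ∀ α β, ContDiff ℝ (⊤ : ℕ∞) fun t => h t α β)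
    (hdet : ∀ t, (Matrix.of (h t)).det ≠ 0)
    (g : (Fin n → ℝ) → Fin n → Fin n → ℝ)
    (gsymm : ∀ q i j, g q i j = g q j i)
    (gsmooth : ∀ i j, ContDiff ℝ (⊤ : ℕ∞) fun q => g q i j)
    (gdet : ∀ q, (Matrix.of (g q)).det ≠ 0)
    (X : Fin n → Fin p → (Fin p → ℝ) → (Fin n → ℝ) → ℝ)
    (Xsmooth : ∀ i α, ContDiff ℝ (⊤ : ℕ∞) fun z : (Fin p → ℝ) × (Fin n → ℝ) => X i α z.1 z.2)
    (x : (Fin p → ℝ) → Fin n → ℝ) (hx : ContDiff ℝ (⊤ : ℕ∞) x) :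
    (∀ (t : Fin p → ℝ) (i : Fin n),
        ∑ α, ∑ β, minv (h t) α β * covHess h g x i α β t
          = (∑ h', ∑ α, ∑ β, ∑ k, ∑ j, minv (g (x t)) i h' * minv (h t) α β
              * g (x t) k j * nablaX g X h' k α t (x t) * X j β t (x t))
            + (∑ α, ∑ β, ∑ j, minv (h t) α β * Fext g X j i α t (x t) * jet x t j β)
            + (∑ α, ∑ β, minv (h t) α β * Dt h X β i α t (x t)))
      ↔ ∃ u : Fin p → Fin n → (Fin p → ℝ) → ℝ,
          (∀ (α : Fin p) (i : Fin n), ContDiff ℝ (⊤ : ℕ∞) (u α i))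
          ∧ (∀ (t : Fin p → ℝ) (α : Fin p) (i : Fin n),
              u α i t = ∑ β, minv (h t) α β * jet x t i β)
          ∧ (∀ (t : Fin p → ℝ) (i : Fin n),
              (∑ α, pd α (u α i) t)
                + (∑ α, ∑ l, christoffel h α α l t * u l i t)
                + (∑ α, ∑ j, ∑ k, christoffel g i j k (x t) * u α j t * jet x t k α)
              = (∑ h', ∑ α, ∑ β, ∑ j, ∑ k, minv (g (x t)) i h' * minv (h t) α β
                  * g (x t) j k * X j β t (x t) * nablaX g X h' k α t (x t))
                + 2 * (∑ h', ∑ α, ∑ j, minv (g (x t)) h' i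
                    * ((1 / 2) * ∑ k, g (x t) k h' * Fext g X j k α t (x t))
                    * u α j t)
                + (∑ α, ∑ β, minv (h t) α β * Dt h X β i α t (x t))) := by
  -- The two right-hand sides order the factors and the summation over `j`, `k` differently.
  have hpot : ∀ (t : Fin p → ℝ) (i : Fin n),
      (∑ h', ∑ α, ∑ β, ∑ j, ∑ k, minv (g (x t)) i h' * minv (h t) α β
          * g (x t) j k * X j β t (x t) * nablaX g X h' k α t (x t))
        = ∑ h', ∑ α, ∑ β, ∑ k, ∑ j, minv (g (x t)) i h' * minv (h t) α β
          * g (x t) k j * nablaX g X h' k α t (x t) * X j β t (x t) := by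
    intro t i
    refine Finset.sum_congr rfl fun h' _ => Finset.sum_congr rfl fun α _ =>
      Finset.sum_congr rfl fun β _ => ?_
    rw [Finset.sum_comm]
    refine Finset.sum_congr rfl fun k _ => Finset.sum_congr rfl fun j _ => ?_
    rw [gsymm (x t) j k]
    ring
  constructor
  · intro H
    refine ⟨fun α i t => ∑ β, minv (h t) α β * jet x t i β, fun α i => ?_,
      fun _ _ _ => rfl, fun t i => ?_⟩
    · exact ContDiff.sum fun β _ => (contDiff_minv hsmooth hdet α β).mul (contDiff_jet hx i β)
    · rw [div_eq_trace_covHess hsymm hsmooth hdet g hx t i, hpot t i,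
        gyroscopic_eq (gsymm (x t)) (gdet (x t)) (minv (h t))
          (fun j k α => Fext g X j k α t (x t)) (jet x t) i]
      exact H t i
  · rintro ⟨u, -, hu, H⟩ t i
    have hu' : u = fun α i t => ∑ β, minv (h t) α β * jet x t i β := by
      funext α i t
      exact hu t α i
    subst hu'
    have Ht := H t i
    rwa [div_eq_trace_covHess hsymm hsmooth hdet g hx t i, hpot t i,
      gyroscopic_eq (gsymm (x t)) (gdet (x t)) (minv (h t))
        (fun j k α => Fext g X j k α t (x t)) (jet x t) i] at Ht
end
end

section
/- (Continuous groups of transformations as potential maps.) Fix r ≥ 1, smooth vector field components ξ^i_a : ℝ^n → ℝ (a = 1,…,r, i = 1,…,n) and smooth functions A^a_α : ℝ^p → ℝ. Every smooth solution x : ℝ^p → ℝ^n of the first-order PDEs system x^i_α(t) = ξ^i_a(x(t)) A^a_α(t) is an extremal of the Lagrangian L = ½ h^{αβ} g_{ij} (x^i_α − ξ^i_a A^a_α)(x^j_β − ξ^j_b A^b_β) √|det h|. -/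
/-!
The Lagrangian is a quadratic form in the defect `x^i_α − ξ^i_a A^a_α`, which vanishes along the
first jet of a solution. A product with two differentiable factors vanishing at a point has zero
derivative there (`hasFDerivAt_zero_of_two_zeros`), so both `∂L/∂x^k` and `∂L/∂x^k_α` vanish
identically along the jet (`hasFDerivAt_quadratic_zero`); hence so does the total derivative of
the latter, and each term of the Euler–Lagrange equations is zero.
-/

open scoped BigOperators

noncomputable section

theorem hasFDerivAt_zero_of_two_zeros {E : Type*} [NormedAddCommGroup E] [NormedSpace ℝ E]
    {c u w : E → ℝ} {y : E} (hc : DifferentiableAt ℝ c y) (hu : DifferentiableAt ℝ u y)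
    (hw : DifferentiableAt ℝ w y) (hu0 : u y = 0) (hw0 : w y = 0) :
    HasFDerivAt (fun z => c z * u z * w z) (0 : E →L[ℝ] ℝ) y := by
  have key := (hc.hasFDerivAt.fun_mul hu.hasFDerivAt).fun_mul hw.hasFDerivAt
  simpa [hu0, hw0] using key

theorem differentiableAt_entry {p n : ℕ} (i : Fin n) (α : Fin p) (w : Fin n → Fin p → ℝ) :
    DifferentiableAt ℝ (fun v : Fin n → Fin p → ℝ => v i α) w :=
  differentiableAt_pi.mp (differentiableAt_pi.mp differentiableAt_id i) α

/-- A quadratic form `½ c_{αβij} u_{iα} u_{jβ} s` with differentiable data is stationary at every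
common zero of the `u_{iα}`. The variable in `E` stands for either
the position variables or the velocity variables of the Lagrangian. -/
theorem hasFDerivAt_quadratic_zero {E : Type*} [NormedAddCommGroup E] [NormedSpace ℝ E]
    {p n : ℕ} {c : Fin p → Fin p → Fin n → Fin n → E → ℝ} {u : Fin n → Fin p → E → ℝ} {y : E}
    (hc : ∀ α β i j, DifferentiableAt ℝ (c α β i j) y)
    (hu : ∀ i α, DifferentiableAt ℝ (u i α) y) (hu0 : ∀ i α, u i α y = 0) (s : ℝ) :
    HasFDerivAt
      (fun z => (1 / 2) * (∑ α, ∑ β, ∑ i, ∑ j, c α β i j z * u i α z * u j β z) * s)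
      (0 : E →L[ℝ] ℝ) y := by
  have key : HasFDerivAt (fun z => ∑ α, ∑ β, ∑ i, ∑ j, c α β i j z * u i α z * u j β z)
      (∑ _α : Fin p, ∑ _β : Fin p, ∑ _i : Fin n, ∑ _j : Fin n, (0 : E →L[ℝ] ℝ)) y :=
    HasFDerivAt.fun_sum fun α _ => HasFDerivAt.fun_sum fun β _ =>
      HasFDerivAt.fun_sum fun i _ => HasFDerivAt.fun_sum fun j _ =>
        hasFDerivAt_zero_of_two_zeros (hc α β i j) (hu i α) (hu j β) (hu0 i α) (hu0 j β)
  simpa using (key.const_mul (1 / 2)).mul_const s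

theorem hasFDerivAt_velocity_zero {p n : ℕ} (C : Fin p → Fin p → Fin n → Fin n → ℝ)
    (b : Fin n → Fin p → ℝ) {w : Fin n → Fin p → ℝ} (hw : ∀ i α, w i α = b i α) (s : ℝ) :
    HasFDerivAt
      (fun v : Fin n → Fin p → ℝ =>
        (1 / 2) * (∑ α, ∑ β, ∑ i, ∑ j, C α β i j * (v i α - b i α) * (v j β - b j β)) * s)
      (0 : (Fin n → Fin p → ℝ) →L[ℝ] ℝ) w := by
  have hC : ∀ (α β : Fin p) (i j : Fin n),
      DifferentiableAt ℝ (fun _ : Fin n → Fin p → ℝ => C α β i j) w :=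
    fun _ _ _ _ => differentiableAt_const _
  have hu : ∀ i α, DifferentiableAt ℝ (fun v : Fin n → Fin p → ℝ => v i α - b i α) w :=
    fun i α => (differentiableAt_entry i α w).sub_const _
  have key := hasFDerivAt_quadratic_zero (E := Fin n → Fin p → ℝ) (y := w)
    (c := fun α β i j _ => C α β i j) (u := fun i α v => v i α - b i α) hC hu
    (fun i α => sub_eq_zero.mpr (hw i α)) s
  exact key

/-- continuous groups of transformations as potential maps: every
solution of `x^i_α = ξ^i_a(x(t)) A^a_α(t)` is an extremal of
`L = ½ h^{αβ} g_{ij}(x^i_α − ξ^i_a A^a_α)(x^j_β − ξ^j_b A^b_β)√|det h|`. -/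
theorem group_solution_is_potential_map
    {p n : ℕ} (hp : 0 < p) (hn : 0 < n)
    (h : (Fin p → ℝ) → Fin p → Fin p → ℝ)
    (hsymm : ∀ t α β, h t α β = h t β α)
    (hsmooth : ∀ α β, ContDiff ℝ (⊤ : ℕ∞) fun t => h t α β)
    (hdet : ∀ t, (Matrix.of (h t)).det ≠ 0)
    (g : (Fin n → ℝ) → Fin n → Fin n → ℝ)
    (gsymm : ∀ q i j, g q i j = g q j i)
    (gsmooth : ∀ i j, ContDiff ℝ (⊤ : ℕ∞) fun q => g q i j)
    (gdet : ∀ q, (Matrix.of (g q)).det ≠ 0)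
    {r : ℕ} (hr : 0 < r)
    (ξ : Fin r → Fin n → (Fin n → ℝ) → ℝ)
    (ξsmooth : ∀ a i, ContDiff ℝ (⊤ : ℕ∞) (ξ a i))
    (A : Fin r → Fin p → (Fin p → ℝ) → ℝ)
    (Asmooth : ∀ a α, ContDiff ℝ (⊤ : ℕ∞) (A a α))
    (x : (Fin p → ℝ) → Fin n → ℝ) (hx : ContDiff ℝ (⊤ : ℕ∞) x)
    (hsol : ∀ (t : Fin p → ℝ) (i : Fin n) (α : Fin p),
      jet x t i α = ∑ a, ξ a i (x t) * A a α t) :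
    IsExtremal
      (fun t q v =>
        (1 / 2) * (∑ α, ∑ β, ∑ i, ∑ j, minv (h t) α β * g q i j
          * (v i α - ∑ a, ξ a i q * A a α t)
          * (v j β - ∑ b, ξ b j q * A b β t)) * sqrtDet h t) x := by
  have dg : ∀ i j, Differentiable ℝ fun q => g q i j := fun i j =>
    (gsmooth i j).differentiable (by simp)
  have dξ : ∀ a i, Differentiable ℝ (ξ a i) := fun a i => (ξsmooth a i).differentiable (by simp)
  intro t k
  have hq := hasFDerivAt_quadratic_zero (y := x t)
    (c := fun α β i j q => minv (h t) α β * g q i j)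
    (u := fun i α q => jet x t i α - ∑ a, ξ a i q * A a α t)
    (fun α β i j => (dg i j _).const_mul _)
    (fun i α => (DifferentiableAt.fun_sum fun a _ => (dξ a i _).mul_const _).const_sub _)
    (fun i α => sub_eq_zero.mpr (hsol t i α)) (sqrtDet h t)
  have hv : ∀ s, HasFDerivAt
      (fun v : Fin n → Fin p → ℝ =>
        (1 / 2) * (∑ α, ∑ β, ∑ i, ∑ j, minv (h s) α β * g (x s) i j
          * (v i α - ∑ a, ξ a i (x s) * A a α s)
          * (v j β - ∑ b, ξ b j (x s) * A b β s)) * sqrtDet h s)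
      (0 : (Fin n → Fin p → ℝ) →L[ℝ] ℝ) (jet x s) := fun s =>
    hasFDerivAt_velocity_zero (fun α β i j => minv (h s) α β * g (x s) i j)
      (fun i α => ∑ a, ξ a i (x s) * A a α s) (fun i α => hsol s i α) (sqrtDet h s)
  have hpos := congrArg (fun T => T (Pi.single k 1)) hq.fderiv
  have hvel : ∀ α, pd α (fun s => fderiv ℝ
      (fun v : Fin n → Fin p → ℝ =>
        (1 / 2) * (∑ α, ∑ β, ∑ i, ∑ j, minv (h s) α β * g (x s) i j
          * (v i α - ∑ a, ξ a i (x s) * A a α s)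
          * (v j β - ∑ b, ξ b j (x s) * A b β s)) * sqrtDet h s)
      (jet x s) (Pi.single k (Pi.single α 1))) t = 0 := by
    intro α
    simp only [fun s => (hv s).fderiv, pd, zero_apply, fderiv_fun_const, Pi.zero_apply]
  exact (congrArg₂ (· - ·) hpos (Finset.sum_eq_zero fun α _ => hvel α)).trans (sub_zero 0)
end
end
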